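/- Let n be an even positive integer such that m = ⌈log₂ n⌉ > 2 is prime, m ≠ 2^j − 1 for every integer j, m divides n, and for every integer d ≠ m − 1 that divides m − 1 one has 2^d ≢ 1 (mod m). Then the broadcast function satisfies B(n+1) ≤ (n·⌊log₂ n⌋)/2 + n/⌈log₂ n⌉ + ⌈log₂ n⌉ − 2. -/

import Mathlib

/-- A broadcast protocol from originator `u` completing in `b` time units:
a nondecreasing sequence of informed sets `I 0 = {u}`, `I b = univ`, where at each
step every newly informed vertex is called by a distinct previously informed neighbor. -/
def IsBroadcastProtocol {V : Type*} (G : SimpleGraph V) (u : V) (b : ℕ) : Prop :=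
  ∃ I : ℕ → Set V,
    I 0 = {u} ∧
    (∀ i, I i ⊆ I (i + 1)) ∧
    I b = Set.univ ∧
    ∀ i, ∃ f : (I (i + 1) \ I i : Set V) → (I i : Set V),
      Function.Injective f ∧ ∀ v, G.Adj (f v) v

/-- The broadcast time `b(u)`: the minimum number of time units needed to broadcast
from `u` to all vertices. -/
noncomputable def broadcastTime {V : Type*} (G : SimpleGraph V) (u : V) : ℕ :=
  sInf {b | IsBroadcastProtocol G u b}

/-- The broadcast function `B(n)`: the minimum number of edges of a broadcast graph on
`n` vertices, i.e. a connected graph in which every vertex can broadcast within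
`⌈log₂ n⌉` time units. -/
noncomputable def broadcastFunction (n : ℕ) : ℕ :=
  sInf {m | ∃ G : SimpleGraph (Fin n), G.Connected ∧ G.edgeSet.ncard = m ∧
    ∀ u, broadcastTime G u ≤ Nat.clog 2 n}

/-!
Take the Knödel graph on `Bool × ZMod N` with `2 * N = n` and `d = ⌊log₂ n⌋` dimensions, the
`k`-th of which matches `(false, z)` with `(true, z + 2 ^ k)`, and add one vertex, the apex, joined
to a set `S`.

The Knödel graph broadcasts in `d + 1` rounds by using the dimensions `k, k + 1, …, k + d` modulo
`d` in turn. The displacement of a message is a signed sum of powers of two, which summation by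
parts turns into a sum of freely chosen bits with weights `1, 2, …, 2 ^ (d - 2), 1 - 2 ^ (d - 1)`,
and these represent every residue modulo `N < 2 ^ d`. As dimension `k` serves in both the first and
the last round, the originator `w` and its partner in dimension `k` have nothing to do in the last
round, so whichever of the two lies in `S` can then call the apex. If the apex itself is the
originator, it plays the part of a vertex `u` all of whose neighbors are in `S`, and `u` is called
last.

It remains to choose a dominating set `S` that contains all neighbors of some `u`. If `2` is a
primitive root modulo `m` and `m - 1 ≤ d`, the vertices `(c, z)` with `m ∣ z` dominate; there are
`n / m` of them, and adding the neighbors of `u = (true, 1)` costs at most `d - 1` more.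
-/

section Protocol

variable {V W : Type*}

theorem IsBroadcastProtocol.of_callers {G : SimpleGraph V} {u : V} {b : ℕ} (I : ℕ → Set V)
    (caller : ℕ → V → V) (hzero : I 0 = {u}) (hsucc : ∀ i, I i ⊆ I (i + 1)) (huniv : I b = Set.univ)
    (hmaps : ∀ i < b, Set.MapsTo (caller i) (I (i + 1) \ I i) (I i))
    (hinj : ∀ i < b, Set.InjOn (caller i) (I (i + 1) \ I i))
    (hadj : ∀ i < b, ∀ v ∈ I (i + 1) \ I i, G.Adj (caller i v) v) :
    IsBroadcastProtocol G u b := by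
  refine ⟨I, hzero, hsucc, huniv, fun i => ?_⟩
  rcases lt_or_ge i b with hi | hi
  · exact ⟨(hmaps i hi).restrict, (hmaps i hi).restrict_inj.2 (hinj i hi), fun v => hadj i hi v v.2⟩
  · have hIi : I i = Set.univ :=
      Set.eq_univ_of_univ_subset (huniv ▸ monotone_nat_of_le_succ hsucc hi)
    have : IsEmpty ↥(I (i + 1) \ I i) := ⟨fun v => v.2.2 (by simp [hIi])⟩
    exact ⟨isEmptyElim, isEmptyElim, isEmptyElim⟩

theorem IsBroadcastProtocol.reachable {G : SimpleGraph V} {u : V} {b : ℕ}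
    (h : IsBroadcastProtocol G u b) (v : V) : G.Reachable u v := by
  obtain ⟨I, hzero, -, huniv, hcall⟩ := h
  have hreach (i : ℕ) : ∀ v ∈ I i, G.Reachable u v := by
    induction i with
    | zero => simp [hzero]
    | succ i ih =>
      intro v hv
      by_cases hvi : v ∈ I i
      · exact ih v hvi
      · obtain ⟨f, -, hadj⟩ := hcall i
        exact (ih _ (f ⟨v, hv, hvi⟩).2).trans (hadj ⟨v, hv, hvi⟩).reachable
  exact hreach b v (huniv ▸ Set.mem_univ v)

theorem IsBroadcastProtocol.map_iso {G : SimpleGraph V} {H : SimpleGraph W} (e : G ≃g H) {u : V}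
    {b : ℕ} (h : IsBroadcastProtocol G u b) : IsBroadcastProtocol H (e u) b := by
  obtain ⟨I, hzero, hsucc, huniv, hcall⟩ := h
  refine ⟨fun i => e.symm ⁻¹' I i, ?_, fun i => Set.preimage_mono (hsucc i), ?_, fun i => ?_⟩
  · ext w
    simp [hzero, RelIso.symm_apply_eq]
  · simp [huniv]
  · obtain ⟨f, hinj, hadj⟩ := hcall i
    refine ⟨fun v => ⟨e (f ⟨e.symm v, v.2⟩), by simp⟩, fun v w hvw => ?_, fun v => ?_⟩
    · simpa [Subtype.ext_iff] using hinj (Subtype.ext (e.injective (congrArg Subtype.val hvw)))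
    · simpa using e.map_adj_iff.2 (hadj ⟨e.symm v, v.2⟩)

theorem broadcastFunction_card_le [Fintype V] [Nonempty V] (G : SimpleGraph V) {b : ℕ}
    (hb : b ≤ Nat.clog 2 (Fintype.card V)) (hG : ∀ u, IsBroadcastProtocol G u b) :
    broadcastFunction (Fintype.card V) ≤ G.edgeSet.ncard := by
  let e := SimpleGraph.Iso.map (Fintype.equivFin V) G
  have hH (u) : IsBroadcastProtocol (G.map (Fintype.equivFin V)) u b := by
    simpa using (hG (e.symm u)).map_iso e
  have : Nonempty (Fin (Fintype.card V)) := ⟨Fintype.equivFin V (Classical.arbitrary V)⟩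
  exact Nat.sInf_le ⟨_, ⟨fun u v => (hH u).reachable v⟩, (Nat.card_congr e.mapEdgeSet).symm,
    fun u => (Nat.sInf_le (hH u)).trans hb⟩

end Protocol

section Matchings

variable {W : Type*}

/-- The vertices informed after `i` rounds of the scheme that starts at `w` and in which, in round
`j`, every informed vertex `p` calls its partner `σ j p`. The maps `σ j` are meant to be
involutions, so that `p` is called in round `j` exactly when `σ j p` is already informed. -/
def informed (σ : ℕ → W → W) (w : W) : ℕ → Set W
  | 0 => {w}
  | i + 1 => informed σ w i ∪ σ i ⁻¹' informed σ w i

theorem informed_monotone (σ : ℕ → W → W) (w : W) : Monotone (informed σ w) :=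
  monotone_nat_of_le_succ fun _ => Set.subset_union_left

/-- In the last round the vertex `x` has nobody to inform in `W`, so it is free to call the extra
vertex. -/
theorem IsBroadcastProtocol.of_informed {G : SimpleGraph (Option W)} {σ : ℕ → W → W} {w x : W}
    {d : ℕ} (hσ : ∀ i, (σ i).Involutive) (hG : ∀ i p, G.Adj (some (σ i p)) (some p))
    (hxG : G.Adj (some x) none) (hx : x ∈ informed σ w d) (hσx : σ d x ∈ informed σ w d)
    (huniv : informed σ w (d + 1) = Set.univ) :
    IsBroadcastProtocol G (some w) (d + 1) := by
  have hcalled {i : ℕ} {y : W} (hy : y ∈ informed σ w (i + 1) \ informed σ w i) :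
      σ i y ∈ informed σ w i := hy.1.resolve_left hy.2
  have hne {y : W} (hy : y ∈ informed σ w (d + 1) \ informed σ w d) : σ d y ≠ x := by
    rintro rfl
    exact hy.2 (hσ d y ▸ hσx)
  refine .of_callers (fun i => {v | v.elim (d < i) (· ∈ informed σ w i)})
    (fun i v => v.elim (some x) (fun y => some (σ i y))) ?_ ?_ ?_ ?_ ?_ ?_
  · ext (_ | y) <;> simp [informed]
  · rintro i (_ | y) hv
    exacts [Nat.lt_succ_of_lt hv, Or.inl hv]
  · ext (_ | y) <;> simp [huniv]
  · rintro i hi (_ | y) hv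
    · obtain rfl : i = d := by grind
      exact hx
    · exact hcalled hv
  · rintro i hi (_ | y) hv (_ | z) hv' h
    · rfl
    · obtain rfl : i = d := by grind
      exact absurd (Option.some.inj h).symm (hne hv')
    · obtain rfl : i = d := by grind
      exact absurd (Option.some.inj h) (hne hv)
    · exact congrArg some ((hσ i).injective (Option.some.inj h))
  · rintro i - (_ | y) -
    exacts [hxG, hG i y]

end Matchings

section Apex

variable {W : Type*}

/-- The graph obtained from `G` by adding a new vertex `none` joined to the vertices in `S`. -/
def addApex (G : SimpleGraph W) (S : Set W) : SimpleGraph (Option W) where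
  Adj
    | some a, some b => G.Adj a b
    | some a, none => a ∈ S
    | none, some b => b ∈ S
    | none, none => False
  symm := ⟨by rintro (_ | a) (_ | b) h; exacts [h, h, h, h.symm]⟩
  loopless := ⟨by rintro (_ | a) h; exacts [h, G.irrefl h]⟩

theorem ncard_edgeSet_addApex_le [Finite W] (G : SimpleGraph W) (S : Set W) :
    (addApex G S).edgeSet.ncard ≤ G.edgeSet.ncard + S.ncard := by
  have hsub : (addApex G S).edgeSet ⊆
      Sym2.map some '' G.edgeSet ∪ (fun a => s(none, some a)) '' S := by
    rintro ⟨_ | a, _ | b⟩ h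
    · exact h.elim
    · exact .inr ⟨b, h, rfl⟩
    · exact .inr ⟨a, h, Sym2.eq_swap⟩
    · exact .inl ⟨s(a, b), h, rfl⟩
  calc (addApex G S).edgeSet.ncard
      ≤ (Sym2.map some '' G.edgeSet ∪ (fun a => s(none, some a)) '' S).ncard :=
        Set.ncard_le_ncard hsub
    _ ≤ (Sym2.map some '' G.edgeSet).ncard + ((fun a => s(none, some a)) '' S).ncard :=
        Set.ncard_union_le _ _
    _ ≤ G.edgeSet.ncard + S.ncard := add_le_add Set.ncard_image_le Set.ncard_image_le

end Apex

section Digits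

theorem pos_of_lt_pow {N b d : ℕ} [NeZero N] (h : N < b ^ d) : 0 < d :=
  Nat.pos_of_ne_zero fun hd => NeZero.ne N (by simpa [hd] using h)

theorem sum_range_testBit_mul_two_pow (y s : ℕ) :
    ∑ j ∈ Finset.range s, (y.testBit j).toNat * 2 ^ j = y % 2 ^ s := by
  induction s with
  | zero => simp [Nat.mod_one]
  | succ s ih => rw [Finset.sum_range_succ, ih, Nat.mod_pow_succ, Nat.toNat_testBit, mul_comm]

/-- The weights are `1, 2, …, 2 ^ (d - 2)` and `1 - 2 ^ (d - 1)`, so the last digit acts as a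
sign. -/
theorem exists_sum_cyclic_digits_eq {d : ℕ} (hd : 0 < d) {y : ℤ} (hy : |y| < 2 ^ (d - 1)) :
    ∃ b : ℕ → Bool, ∑ j ∈ Finset.range d, ((b j).toNat : ℤ) * (2 ^ ((j + 1) % d) - 2 ^ j) = y := by
  obtain ⟨s, rfl⟩ : ∃ s, d = s + 1 := ⟨d - 1, by omega⟩
  rw [Nat.add_sub_cancel, abs_lt] at hy
  have hdigits (ε : Bool) (x : ℕ) (hx : x < 2 ^ s) : ∃ b : ℕ → Bool,
      ∑ j ∈ Finset.range (s + 1), ((b j).toNat : ℤ) * (2 ^ ((j + 1) % (s + 1)) - 2 ^ j) =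
        x + ε.toNat * (1 - 2 ^ s) := by
    refine ⟨fun j => if j < s then x.testBit j else ε, ?_⟩
    simp only [Finset.sum_range_succ, if_neg (lt_irrefl s), Nat.mod_self, pow_zero]
    congr 1
    have hbits := sum_range_testBit_mul_two_pow x s
    rw [Nat.mod_eq_of_lt hx] at hbits
    rw [← hbits, Nat.cast_sum, hbits]
    refine Finset.sum_congr rfl fun j hj => ?_
    have hjs : j < s := Finset.mem_range.1 hj
    rw [if_pos hjs, Nat.mod_eq_of_lt (by omega)]
    push_cast
    ring
  rcases le_or_gt 0 y with hy0 | hy0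
  · lift y to ℕ using hy0
    simpa using hdigits false y (by exact_mod_cast hy.2)
  · obtain ⟨x, hx⟩ : ∃ x : ℕ, (x : ℤ) = y + (2 ^ s - 1) := ⟨_, Int.toNat_of_nonneg (by omega)⟩
    have hxs : (x : ℤ) < 2 ^ s := by omega
    obtain ⟨b, hb⟩ := hdigits true x (by exact_mod_cast hxs)
    exact ⟨b, by rw [hb, hx, Bool.toNat_true]; ring⟩

theorem sum_range_add_mod {M : Type*} [AddCommMonoid M] (f : ℕ → M) (k d : ℕ) :
    ∑ i ∈ Finset.range d, f ((k + i) % d) = ∑ j ∈ Finset.range d, f j := by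
  have himage := Finset.sum_image (f := f) (Nat.mod_injOn_Ico k d)
  rw [Nat.image_Ico_mod, Finset.sum_Ico_eq_sum_range, Nat.add_sub_cancel_left] at himage
  exact himage.symm

theorem sum_range_sub_mul_eq {R : Type*} [CommRing R] (f g : ℕ → R) (t : ℕ) :
    ∑ i ∈ Finset.range (t + 1), (f (i + 1) - f i) * g i =
      f (t + 1) * g t - f 0 * g 0 - ∑ i ∈ Finset.range t, f (i + 1) * (g (i + 1) - g i) := by
  induction t with
  | zero => simp [sub_mul]
  | succ t ih => rw [Finset.sum_range_succ, ih, Finset.sum_range_succ _ t]; ring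

end Digits

section Knodel

variable {N d : ℕ}

/-- The partner of a vertex in dimension `k` of the Knödel graph on `2 * N` vertices: the vertex
`(false, z)` is matched with `(true, z + 2 ^ k)`. -/
def knodelPartner (N k : ℕ) : Bool × ZMod N → Bool × ZMod N
  | (false, z) => (true, z + 2 ^ k)
  | (true, z) => (false, z - 2 ^ k)

theorem knodelPartner_involutive (N k : ℕ) : (knodelPartner N k).Involutive := by
  rintro ⟨_ | _, z⟩ <;> simp [knodelPartner]

/-- The Knödel graph on `2 * N` vertices with the dimensions `0, …, d - 1`. -/
def knodelGraph (N d : ℕ) : SimpleGraph (Bool × ZMod N) where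
  Adj p q := ∃ k < d, knodelPartner N k p = q
  symm := ⟨by rintro p _ ⟨k, hk, rfl⟩; exact ⟨k, hk, knodelPartner_involutive N k p⟩⟩
  loopless := ⟨by rintro ⟨_ | _, z⟩ ⟨k, -, h⟩ <;> simp [knodelPartner] at h⟩

theorem ncard_edgeSet_knodelGraph_le (N d : ℕ) [NeZero N] :
    (knodelGraph N d).edgeSet.ncard ≤ N * d := by
  let edge : ZMod N × ℕ → Sym2 (Bool × ZMod N) :=
    fun e => s((false, e.1), knodelPartner N e.2 (false, e.1))
  have hsub : (knodelGraph N d).edgeSet ⊆ edge '' (Set.univ ×ˢ ↑(Finset.range d)) := by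
    rintro ⟨⟨_ | _, z⟩, q⟩ ⟨k, hk, hq : knodelPartner N k (_, z) = q⟩ <;> subst hq
    · exact ⟨(z, k), by simpa using hk, rfl⟩
    · refine ⟨(z - 2 ^ k, k), by simpa using hk, ?_⟩
      simp [edge, knodelPartner]
  calc (knodelGraph N d).edgeSet.ncard
      ≤ (edge '' (Set.univ ×ˢ ↑(Finset.range d))).ncard :=
        Set.ncard_le_ncard hsub (Set.toFinite _)
    _ ≤ ((Set.univ : Set (ZMod N)) ×ˢ (↑(Finset.range d) : Set ℕ)).ncard :=
        Set.ncard_image_le (Set.toFinite _)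
    _ = N * d := by simp [Set.ncard_prod, Set.ncard_univ, -Finset.coe_range]

/-- The Boolean sequence `e` records the side of the bipartition on which a message is after each
round; the message crosses over in round `i` exactly when `e (i + 1) ≠ e i`. -/
theorem walk_mem_informed (a : ℕ → ℕ) (e : ℕ → Bool) (z : ZMod N) (t : ℕ) :
    (e t, z + ∑ i ∈ Finset.range t,
      (((e (i + 1)).toNat : ZMod N) - (e i).toNat) * 2 ^ a i) ∈
      informed (fun i => knodelPartner N (a i)) (e 0, z) t := by
  induction t with
  | zero => simp [informed]
  | succ t ih =>
    rw [Finset.sum_range_succ, ← add_assoc]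
    generalize z + ∑ i ∈ Finset.range t, _ = z' at ih ⊢
    cases h : e t <;> cases h' : e (t + 1) <;> rw [h] at ih
    · exact .inl (by simpa using ih)
    · exact .inr (by simpa [knodelPartner] using ih)
    · exact .inr (by simpa [knodelPartner] using ih)
    · exact .inl (by simpa using ih)

theorem exists_sum_cyclic_digits_eq_zmod [NeZero N] (hN : N < 2 ^ d) (y : ZMod N) :
    ∃ b : ℕ → Bool,
      ∑ j ∈ Finset.range d, ((b j).toNat : ZMod N) * (2 ^ ((j + 1) % d) - 2 ^ j) = y := by
  have hd : 0 < d := pos_of_lt_pow hN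
  have hy : |y.valMinAbs| < 2 ^ (d - 1) := by
    have hle := y.natAbs_valMinAbs_le
    have hpow : 2 ^ d = 2 * 2 ^ (d - 1) := (mul_pow_sub_one hd.ne' 2).symm
    rw [Int.abs_eq_natAbs]
    exact_mod_cast (by omega : y.valMinAbs.natAbs < 2 ^ (d - 1))
  obtain ⟨b, hb⟩ := exists_sum_cyclic_digits_eq hd hy
  refine ⟨b, ?_⟩
  rw [← y.coe_valMinAbs, ← hb]
  push_cast
  rfl

/-- Since dimension `k` is used both in the first and in the last round, summation by parts turns
the displacement of a message into a cyclic digit sum. -/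
theorem informed_knodelPartner_eq_univ [NeZero N] (hN : N < 2 ^ d) (k : ℕ) (w : Bool × ZMod N) :
    informed (fun i => knodelPartner N ((k + i) % d)) w (d + 1) = Set.univ := by
  obtain ⟨c, z⟩ := w
  refine Set.eq_univ_of_forall fun ⟨c', z'⟩ => ?_
  set y : ZMod N := ((c'.toNat : ZMod N) - c.toNat) * 2 ^ (k % d) - (z' - z) with hy
  obtain ⟨b, hb⟩ := exists_sum_cyclic_digits_eq_zmod hN y
  let a : ℕ → ℕ := fun i => (k + i) % d
  let e : ℕ → Bool
    | 0 => c
    | i + 1 => if i < d then b (a i) else c'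
  have hsum : ∑ i ∈ Finset.range d,
      ((e (i + 1)).toNat : ZMod N) * (2 ^ a (i + 1) - 2 ^ a i) = y := by
    rw [← hb, ← sum_range_add_mod (fun j => ((b j).toNat : ZMod N) * (2 ^ ((j + 1) % d) - 2 ^ j)) k]
    refine Finset.sum_congr rfl fun i hi => ?_
    simp only [e, a, if_pos (Finset.mem_range.1 hi), Nat.mod_add_mod, add_assoc]
  have hmem := walk_mem_informed a e z (d + 1)
  rw [sum_range_sub_mul_eq (fun i => ((e i).toNat : ZMod N)) (fun i => 2 ^ a i), hsum] at hmem
  convert hmem using 2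
  · simp [e]
  · simp only [e, a, hy, lt_irrefl, if_false, add_zero, Nat.add_mod_right]
    ring

theorem IsBroadcastProtocol.of_knodelPartner_adj [NeZero N] (hN : N < 2 ^ d)
    {G : SimpleGraph (Option (Bool × ZMod N))}
    (hG : ∀ k < d, ∀ p, G.Adj (some (knodelPartner N k p)) (some p)) {k : ℕ} (hk : k < d)
    {w x : Bool × ZMod N} (hx : x = w ∨ x = knodelPartner N k w) (hxG : G.Adj (some x) none) :
    IsBroadcastProtocol G (some w) (d + 1) := by
  set σ : ℕ → Bool × ZMod N → Bool × ZMod N := fun i => knodelPartner N ((k + i) % d)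
  have hσ (i : ℕ) : (σ i).Involutive := knodelPartner_involutive N _
  have hσ0 : σ 0 = knodelPartner N k := by simp [σ, Nat.mod_eq_of_lt hk]
  have hσd : σ d = knodelPartner N k := by simp [σ, Nat.mod_eq_of_lt hk]
  have hd : 1 ≤ d := by omega
  have hw : w ∈ informed σ w d := informed_monotone σ w d.zero_le rfl
  have hσw : knodelPartner N k w ∈ informed σ w d :=
    informed_monotone σ w hd (.inr (by simp [hσ0, knodelPartner_involutive N k w, informed]))
  refine .of_informed hσ (fun i => hG _ (Nat.mod_lt _ hd)) hxG ?_ ?_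
    (informed_knodelPartner_eq_univ hN k w)
  · rcases hx with rfl | rfl <;> assumption
  · rcases hx with rfl | rfl
    · rwa [hσd]
    · rwa [hσd, knodelPartner_involutive N k w]

theorem IsBroadcastProtocol.addApex_knodelGraph_none [NeZero N] (hN : N < 2 ^ d)
    {S : Set (Bool × ZMod N)} {u : Bool × ZMod N} (hu : ∀ k < d, knodelPartner N k u ∈ S) :
    IsBroadcastProtocol (addApex (knodelGraph N d) S) none (d + 1) := by
  classical
  have hd : 0 < d := pos_of_lt_pow hN
  -- The apex plays the part of `u`, and `u` itself is the vertex informed in the last round.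
  let swap := Equiv.swap none (some u)
  have hswap (p) (hp : p ≠ u) : swap (some p) = some p :=
    Equiv.swap_apply_of_ne_of_ne (by simp) (by simpa using hp)
  have hne (k : ℕ) : knodelPartner N k u ≠ u := by obtain ⟨_ | _, z⟩ := u <;> simp [knodelPartner]
  have hpartner (k : ℕ) (hk : k < d) (p) : (addApex (knodelGraph N d) S).Adj
      (swap (some (knodelPartner N k p))) (swap (some p)) := by
    by_cases hp : p = u
    · subst hp
      rw [hswap _ (hne k), Equiv.swap_apply_right]
      exact hu k hk
    · by_cases hp' : knodelPartner N k p = u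
      · rw [hp', Equiv.swap_apply_right, hswap p hp, ← knodelPartner_involutive N k p, hp']
        exact hu k hk
      · rw [hswap _ hp', hswap p hp]
        exact ⟨k, hk, knodelPartner_involutive N k p⟩
  have hprotocol :
      IsBroadcastProtocol ((addApex (knodelGraph N d) S).comap swap) (some u) (d + 1) :=
    .of_knodelPartner_adj hN hpartner hd (.inr rfl) (by
      rw [SimpleGraph.comap_adj, hswap _ (hne 0), Equiv.swap_apply_left]
      exact ⟨0, hd, knodelPartner_involutive N 0 u⟩)
  simpa [swap] using hprotocol.map_iso (SimpleGraph.Iso.comap swap _)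

theorem broadcastFunction_two_mul_add_one_le (hdN : 2 ^ d ≤ 2 * N) (hN : N < 2 ^ d)
    {S : Set (Bool × ZMod N)} {u : Bool × ZMod N} (hu : ∀ k < d, knodelPartner N k u ∈ S)
    (hS : ∀ w, w ∈ S ∨ ∃ k < d, knodelPartner N k w ∈ S) :
    broadcastFunction (2 * N + 1) ≤ N * d + S.ncard := by
  have : NeZero N := ⟨by rintro rfl; simp at hdN⟩
  have hd : 0 < d := pos_of_lt_pow hN
  have hcard : Fintype.card (Option (Bool × ZMod N)) = 2 * N + 1 := by simp [ZMod.card]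
  have hadj (k) (hk : k < d) (p) :
      (addApex (knodelGraph N d) S).Adj (some (knodelPartner N k p)) (some p) :=
    ⟨k, hk, knodelPartner_involutive N k p⟩
  have hprotocol : ∀ v, IsBroadcastProtocol (addApex (knodelGraph N d) S) v (d + 1)
    | none => .addApex_knodelGraph_none hN hu
    | some w => by
      obtain ⟨k, hk, x, hx, hxS⟩ : ∃ k < d, ∃ x, (x = w ∨ x = knodelPartner N k w) ∧ x ∈ S := by
        rcases hS w with hw | ⟨k, hk, hkw⟩
        exacts [⟨0, hd, w, .inl rfl, hw⟩, ⟨k, hk, _, .inr rfl, hkw⟩]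
      exact .of_knodelPartner_adj hN hadj hk hx hxS
  have hclog : d + 1 ≤ Nat.clog 2 (Fintype.card (Option (Bool × ZMod N))) := by
    rw [Nat.succ_le_iff, Nat.lt_clog_iff_pow_lt one_lt_two, hcard]
    omega
  calc broadcastFunction (2 * N + 1)
      ≤ (addApex (knodelGraph N d) S).edgeSet.ncard :=
        hcard ▸ broadcastFunction_card_le _ hclog hprotocol
    _ ≤ (knodelGraph N d).edgeSet.ncard + S.ncard := ncard_edgeSet_addApex_le _ S
    _ ≤ N * d + S.ncard := by gcongr; exact ncard_edgeSet_knodelGraph_le N d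

end Knodel

section PrimitiveRoot

variable {m q d : ℕ}

theorem isPrimitiveRoot_of_forall_not_modEq (hprime : m.Prime) {a : ℕ} (ha : ¬ m ∣ a)
    (hord : ∀ d : ℕ, d ∣ m - 1 → d ≠ m - 1 → ¬ a ^ d ≡ 1 [MOD m]) :
    IsPrimitiveRoot (a : ZMod m) (m - 1) := by
  have : Fact m.Prime := ⟨hprime⟩
  have ha0 : (a : ZMod m) ≠ 0 := (ZMod.natCast_eq_zero_iff a m).not.2 ha
  rw [IsPrimitiveRoot.iff_orderOf]
  by_contra hne
  refine hord _ (orderOf_dvd_of_pow_eq_one (ZMod.pow_card_sub_one_eq_one ha0)) hne ?_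
  rw [← ZMod.natCast_eq_natCast_iff]
  exact_mod_cast pow_orderOf_eq_one (a : ZMod m)

theorem exists_pow_eq_of_isPrimitiveRoot [Fact m.Prime] {a x : ZMod m}
    (ha : IsPrimitiveRoot a (m - 1)) (hx : x ≠ 0) : ∃ k < m - 1, a ^ k = x :=
  have : NeZero (m - 1) := ⟨Nat.sub_ne_zero_of_lt (Fact.out : m.Prime).one_lt⟩
  ha.eq_pow_of_pow_eq_one (ZMod.pow_card_sub_one_eq_one hx)

/-- The neighborhood of the apex: the vertices of the Knödel graph on `2 * (m * q)` vertices whose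
second coordinate is divisible by `m`, together with all neighbors of the vertex `(true, 1)`. The
neighbor `(false, 0)` in dimension `0` is already of the first kind. -/
def apexNeighbors (m q d : ℕ) : Set (Bool × ZMod (m * q)) :=
  {w | ZMod.castHom (dvd_mul_right m q) (ZMod m) w.2 = 0} ∪
    (fun k => knodelPartner (m * q) k (true, 1)) '' Set.Ico 1 d

theorem ncard_castHom_eq_zero (m q : ℕ) [NeZero m] :
    {z : ZMod (m * q) | ZMod.castHom (dvd_mul_right m q) (ZMod m) z = 0}.ncard = q := by
  set φ := (ZMod.castHom (dvd_mul_right m q) (ZMod m)).toAddMonoidHom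
  have hsurj : Function.Surjective φ := ZMod.castHom_surjective (dvd_mul_right m q)
  have hmul : Nat.card φ.ker * m = m * q := by
    simpa [AddSubgroup.index_ker, AddMonoidHom.range_eq_top_of_surjective φ hsurj] using
      φ.ker.card_mul_index
  exact Nat.eq_of_mul_eq_mul_right (NeZero.pos m) (hmul.trans (mul_comm m q))

theorem ncard_apexNeighbors_le (m q d : ℕ) [NeZero m] :
    (apexNeighbors m q d).ncard ≤ 2 * q + (d - 1) := by
  refine (Set.ncard_union_le _ _).trans (add_le_add (Eq.le ?_) ?_)
  · calc {w : Bool × ZMod (m * q) | ZMod.castHom (dvd_mul_right m q) (ZMod m) w.2 = 0}.ncard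
        = ((Set.univ : Set Bool) ×ˢ
            {z | ZMod.castHom (dvd_mul_right m q) (ZMod m) z = 0}).ncard := by
          rw [Set.univ_prod]; rfl
      _ = 2 * q := by
          rw [Set.ncard_prod, ncard_castHom_eq_zero, Set.ncard_univ, Nat.card_eq_fintype_card,
            Fintype.card_bool]
  · refine (Set.ncard_image_le (Set.finite_Ico 1 d)).trans_eq ?_
    rw [← Finset.coe_Ico, Set.ncard_coe_finset, Nat.card_Ico]

theorem knodelPartner_true_one_mem_apexNeighbors {k : ℕ} (hk : k < d) :
    knodelPartner (m * q) k (true, 1) ∈ apexNeighbors m q d := by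
  rcases Nat.eq_zero_or_pos k with rfl | hk0
  · exact .inl (by simp [knodelPartner])
  · exact .inr ⟨k, ⟨hk0, hk⟩, rfl⟩

theorem mem_apexNeighbors_or_exists_knodelPartner_mem [Fact m.Prime]
    (hroot : IsPrimitiveRoot (2 : ZMod m) (m - 1)) (hd : m - 1 ≤ d) (w : Bool × ZMod (m * q)) :
    w ∈ apexNeighbors m q d ∨ ∃ k < d, knodelPartner (m * q) k w ∈ apexNeighbors m q d := by
  set φ := ZMod.castHom (dvd_mul_right m q) (ZMod m) with hφ
  by_cases hw : φ w.2 = 0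
  · exact .inl (.inl hw)
  · obtain ⟨_ | _, z⟩ := w
    · obtain ⟨k, hk, hpow⟩ := exists_pow_eq_of_isPrimitiveRoot hroot (neg_ne_zero.2 hw)
      refine .inr ⟨k, hk.trans_le hd, .inl ?_⟩
      simp only [Set.mem_ofPred_eq, knodelPartner, map_add, map_pow, map_ofNat, hpow, ← hφ,
        add_neg_cancel]
    · obtain ⟨k, hk, hpow⟩ := exists_pow_eq_of_isPrimitiveRoot hroot hw
      refine .inr ⟨k, hk.trans_le hd, .inl ?_⟩
      simp only [Set.mem_ofPred_eq, knodelPartner, map_sub, map_pow, map_ofNat, hpow, ← hφ,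
        sub_self]

end PrimitiveRoot

theorem clog_eq_log_add_one {b n : ℕ} (hb : 1 < b) (hn : n ≠ 0) (hpow : b ^ Nat.log b n ≠ n) :
    Nat.clog b n = Nat.log b n + 1 := by
  refine le_antisymm (Nat.clog_le_of_le_pow (Nat.lt_pow_succ_log_self hb n).le) ?_
  rw [Nat.succ_le_iff, Nat.lt_clog_iff_pow_lt hb]
  exact (Nat.pow_log_le_self b hn).lt_of_ne hpow

theorem broadcastFunction_succ_le_general (n m : ℕ) (heven : Even n) (hm : m ≤ Nat.clog 2 n)
    (hprime : m.Prime) (hdvd : m ∣ n) (hroot : IsPrimitiveRoot (2 : ZMod m) (m - 1)) :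
    broadcastFunction (n + 1) ≤ n * Nat.log 2 n / 2 + n / m + Nat.clog 2 n - 2 := by
  have : Fact m.Prime := ⟨hprime⟩
  have hm2 : m ≠ 2 := by
    rintro rfl
    exact absurd hroot.pow_eq_one (by decide)
  have hcoprime : Nat.Coprime 2 m := (Nat.coprime_primes Nat.prime_two hprime).2 hm2.symm
  obtain ⟨q, hq⟩ : 2 * m ∣ n := hcoprime.mul_dvd_of_dvd_of_dvd heven.two_dvd hdvd
  obtain rfl : n = 2 * (m * q) := hq.trans (mul_assoc 2 m q)
  have hn : 2 * (m * q) ≠ 0 := fun h => hprime.ne_zero (by simpa [h] using hm)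
  have hpow (k : ℕ) : 2 ^ k ≠ 2 * (m * q) := fun h =>
    hm2 ((Nat.prime_dvd_prime_iff_eq hprime Nat.prime_two).1 (hprime.dvd_of_dvd_pow (h ▸ hdvd)))
  have hclog := clog_eq_log_add_one one_lt_two hn (hpow _)
  set d := Nat.log 2 (2 * (m * q))
  have hlower : 2 ^ d ≤ 2 * (m * q) := Nat.pow_log_le_self 2 hn
  have hupper : 2 * (m * q) < 2 ^ (d + 1) := Nat.lt_pow_succ_log_self one_lt_two _
  have hd1 : 1 ≤ d := by have := hprime.two_le; omega
  calc broadcastFunction (2 * (m * q) + 1)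
      ≤ m * q * d + (apexNeighbors m q d).ncard :=
        broadcastFunction_two_mul_add_one_le hlower (by rw [pow_succ] at hupper; omega)
          (fun k hk => knodelPartner_true_one_mem_apexNeighbors hk)
          (mem_apexNeighbors_or_exists_knodelPartner_mem hroot (by omega))
    _ ≤ m * q * d + (2 * q + (d - 1)) := by gcongr; exact ncard_apexNeighbors_le m q d
    _ = 2 * (m * q) * d / 2 + 2 * (m * q) / m + Nat.clog 2 (2 * (m * q)) - 2 := by
      rw [mul_assoc 2 (m * q) d, Nat.mul_div_cancel_left _ two_pos, mul_left_comm 2 m q,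
        Nat.mul_div_cancel_left _ hprime.pos, ← mul_left_comm 2 m q, hclog]
      omega

/-- Harutyunyan–Liestman: if `n` is even, `m = ⌈log₂ n⌉ > 2` is prime, `m ≠ 2^j - 1` for
every integer `j`, `m` divides `n`, and `2^d ≢ 1 (mod m)` for every divisor `d ≠ m - 1` of
`m - 1`, then `B(n+1) ≤ n·⌊log₂ n⌋/2 + n/⌈log₂ n⌉ + ⌈log₂ n⌉ - 2`. -/
theorem broadcastFunction_succ_le (n m : ℕ) (heven : Even n) (hm : m = Nat.clog 2 n)
    (hm2 : 2 < m) (hprime : Nat.Prime m) (hmj : ∀ j : ℕ, (m : ℤ) ≠ 2 ^ j - 1)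
    (hdvd : m ∣ n)
    (hord : ∀ d : ℕ, d ∣ m - 1 → d ≠ m - 1 → ¬ 2 ^ d ≡ 1 [MOD m]) :
    broadcastFunction (n + 1) ≤ n * Nat.log 2 n / 2 + n / m + m - 2 := by
  have hroot : IsPrimitiveRoot (2 : ZMod m) (m - 1) :=
    isPrimitiveRoot_of_forall_not_modEq hprime (Nat.not_dvd_of_pos_of_lt two_pos hm2) hord
  simpa only [← hm] using broadcastFunction_succ_le_general n m heven hm.le hprime hdvd hroot
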